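/- Let d, d_B ≥ 1 and let N be a quantum channel from d×d matrices to d_B×d_B matrices. Let G be a finite set and for each g ∈ G let U^g be a d×d unitary and V^g a d_B×d_B unitary such that (i) (1/|G|) ∑_g U^g X (U^g)† = (Tr X)·1_d/d for every d×d matrix X (the input representation is a unitary one-design), and (ii) N(U^g ρ (U^g)†) = V^g N(ρ) (V^g)† for all ρ and g (covariance). Let Φ be the maximally entangled state on ℂ^d ⊗ ℂ^d and set ω^g = (id ⊗ N)((1 ⊗ U^g) Φ (1 ⊗ U^g)†) for each g ∈ G. Then for every probability distribution p on G, the Holevo information satisfies S(∑_g p(g) ω^g) − ∑_g p(g) S(ω^g) ≤ log₂ d + S(N(1_d/d)) − S((id ⊗ N)(Φ)), and equality holds when p is the uniform distribution. (The right-hand side equals the quantum mutual information I(R;B) of the Choi state (id ⊗ N)(Φ), which is the entanglement-assisted classical capacity of N; hence the quantum reading capacity of the jointly covariant memory cell {N ∘ U^g}_{g∈G} equals I(R;B)_{N(Φ)}.) -/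

import Mathlib

open Matrix Kronecker
open scoped ComplexOrder

noncomputable section

/-- A density matrix: positive semidefinite with unit trace. -/
def DensityMatrix {n : Type*} [Fintype n] (ρ : Matrix n n ℂ) : Prop :=
  ρ.PosSemidef ∧ ρ.trace = 1

/-- The von Neumann entropy (base 2) of a matrix, via its eigenvalues. -/
def entropy {n : Type*} [Fintype n] [DecidableEq n] (ρ : Matrix n n ℂ) : ℝ :=
  if h : ρ.IsHermitian then (∑ i, Real.negMulLog (h.eigenvalues i)) / Real.log 2 else 0

/-- The extension `id_r ⊗ N` of a linear map `N` on matrices, acting on matrices with an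
extra (left) tensor factor `r`. -/
def idTensor {m n r : Type*} (N : Matrix m m ℂ →ₗ[ℂ] Matrix n n ℂ)
    (ρ : Matrix (r × m) (r × m) ℂ) : Matrix (r × n) (r × n) ℂ :=
  Matrix.of fun p q => N (Matrix.of fun x y => ρ (p.1, x) (q.1, y)) p.2 q.2

/-- A quantum channel: a trace-preserving and completely positive linear map on matrices. -/
def IsQuantumChannel {m n : Type*} [Fintype m] [Fintype n]
    (N : Matrix m m ℂ →ₗ[ℂ] Matrix n n ℂ) : Prop :=
  (∀ X, (N X).trace = X.trace) ∧
  ∀ (k : ℕ) (ρ : Matrix (Fin k × m) (Fin k × m) ℂ), ρ.PosSemidef → (idTensor N ρ).PosSemidef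

/-- The maximally entangled state of Schmidt rank `d` on `ℂ^d ⊗ ℂ^d`. -/
def maxEntSq (d : ℕ) : Matrix (Fin d × Fin d) (Fin d × Fin d) ℂ :=
  Matrix.of fun p q => if p.2 = p.1 ∧ q.2 = q.1 then ((d : ℂ))⁻¹ else 0

/-!
Writing `Φ` for the maximally entangled state, `(1 ⊗ U) Φ (1 ⊗ U)† = (Uᵀ ⊗ 1) Φ (Uᵀ ⊗ 1)†`, and
`id ⊗ N` commutes with operations on the left factor. Every output `ω^g` is therefore unitarily
equivalent to `(id ⊗ N)(Φ)`, and the Holevo information is `S(ω) − S((id ⊗ N)(Φ))` for the average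
output `ω`. The marginals of `ω` are `1/d` and `N(1/d)`, so subadditivity of the entropy gives the
bound. For uniform weights the one-design property turns the average input into
`(1/d) ⊗ (1/d)`; then `ω = (1/d) ⊗ N(1/d)` is a product and subadditivity is an equality.

Subadditivity reduces to its classical case: measuring a state in a product of eigenbases of its
marginals can only increase the entropy of the state and leaves those of the marginals unchanged.
-/

section Shannon

variable {ι α β : Type*} [Fintype ι] [Fintype α] [Fintype β]

theorem negMulLog_le_sub_mul_log {x q : ℝ} (hx : 0 ≤ x) (hq : 0 ≤ q) (hxq : q = 0 → x = 0) :
    Real.negMulLog x ≤ q - x - x * Real.log q := by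
  rcases hx.eq_or_lt with rfl | hx
  · simpa using hq
  have hq : 0 < q := hq.lt_of_ne' fun h => hx.ne' (hxq h)
  have hlog : x * (Real.log q - Real.log x) ≤ q - x := by
    calc x * (Real.log q - Real.log x) = x * Real.log (q / x) := by
          rw [Real.log_div hq.ne' hx.ne']
      _ ≤ x * (q / x - 1) := by gcongr; exact Real.log_le_sub_one_of_pos (by positivity)
      _ = q - x := by field_simp
  rw [Real.negMulLog]
  linarith

theorem sum_negMulLog_le_neg_sum_mul_log {x q : ι → ℝ} (hx : ∀ i, 0 ≤ x i) (hq : ∀ i, 0 ≤ q i)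
    (hxq : ∀ i, q i = 0 → x i = 0) (hsum : ∑ i, q i ≤ ∑ i, x i) :
    ∑ i, Real.negMulLog (x i) ≤ -∑ i, x i * Real.log (q i) := by
  calc ∑ i, Real.negMulLog (x i)
      ≤ ∑ i, (q i - x i - x i * Real.log (q i)) :=
        Finset.sum_le_sum fun i _ => negMulLog_le_sub_mul_log (hx i) (hq i) (hxq i)
    _ = ∑ i, q i - ∑ i, x i - ∑ i, x i * Real.log (q i) := by
        simp only [Finset.sum_sub_distrib]
    _ ≤ -∑ i, x i * Real.log (q i) := by linarith

theorem sum_negMulLog_le_sum_negMulLog_marginals {P : α → β → ℝ} (hP : ∀ a b, 0 ≤ P a b)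
    (hsum : ∑ a, ∑ b, P a b = 1) :
    ∑ a, ∑ b, Real.negMulLog (P a b)
      ≤ ∑ a, Real.negMulLog (∑ b, P a b) + ∑ b, Real.negMulLog (∑ a, P a b) := by
  set Pα : α → ℝ := fun a => ∑ b, P a b
  set Pβ : β → ℝ := fun b => ∑ a, P a b
  have le_Pα : ∀ a b, P a b ≤ Pα a := fun a b =>
    Finset.single_le_sum (fun b _ => hP a b) (Finset.mem_univ b)
  have le_Pβ : ∀ a b, P a b ≤ Pβ b := fun a b =>
    Finset.single_le_sum (fun a _ => hP a b) (Finset.mem_univ a)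
  have zero_of_marginal : ∀ a b, Pα a = 0 ∨ Pβ b = 0 → P a b = 0 := fun a b h =>
    (hP a b).antisymm' (h.elim (fun h => h ▸ le_Pα a b) fun h => h ▸ le_Pβ a b)
  have mul_log_marginals : ∀ a b, P a b * Real.log (Pα a * Pβ b)
      = P a b * Real.log (Pα a) + P a b * Real.log (Pβ b) := fun a b => by
    by_cases h : P a b = 0
    · simp [h]
    · rw [Real.log_mul (fun h0 => h (zero_of_marginal a b (.inl h0)))
        (fun h0 => h (zero_of_marginal a b (.inr h0))), mul_add]
  have sum_product : ∑ i : α × β, Pα i.1 * Pβ i.2 = ∑ i : α × β, P i.1 i.2 := by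
    have hβ : ∑ b, Pβ b = 1 := by rw [Finset.sum_comm, hsum]
    simp only [Fintype.sum_prod_type, ← Finset.mul_sum, hβ, mul_one, Pα]
  have gibbs := sum_negMulLog_le_neg_sum_mul_log (x := fun i : α × β => P i.1 i.2)
    (q := fun i => Pα i.1 * Pβ i.2) (fun i => hP i.1 i.2)
    (fun i => mul_nonneg ((hP _ _).trans (le_Pα i.1 i.2)) ((hP _ _).trans (le_Pβ i.1 i.2)))
    (fun i h => zero_of_marginal i.1 i.2 (mul_eq_zero.1 h)) sum_product.le
  simp only [Fintype.sum_prod_type, mul_log_marginals, Finset.sum_add_distrib] at gibbs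
  refine gibbs.trans_eq ?_
  rw [Finset.sum_comm (f := fun a b => P a b * Real.log (Pβ b))]
  simp only [← Finset.sum_mul, Real.negMulLog, neg_mul, Finset.sum_neg_distrib, neg_add, Pα, Pβ]

theorem sum_le_sum_mulVec_of_mem_doublyStochastic [DecidableEq ι] {s : Set ℝ} {f : ℝ → ℝ}
    (hf : ConcaveOn ℝ s f) {M : Matrix ι ι ℝ} (hM : M ∈ doublyStochastic ℝ ι) {x : ι → ℝ}
    (hx : ∀ i, x i ∈ s) : ∑ i, f (x i) ≤ ∑ i, f ((M *ᵥ x) i) := by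
  calc ∑ j, f (x j) = ∑ j, (∑ i, M i j) * f (x j) := by
        simp only [sum_col_of_mem_doublyStochastic hM, one_mul]
    _ = ∑ i, ∑ j, M i j * f (x j) := by simp only [Finset.sum_mul]; exact Finset.sum_comm
    _ ≤ ∑ i, f ((M *ᵥ x) i) := Finset.sum_le_sum fun i _ =>
        hf.le_map_sum (fun _ _ => nonneg_of_mem_doublyStochastic hM)
          (sum_row_of_mem_doublyStochastic hM i) fun j _ => hx j

end Shannon

section Entropy

variable {m n : Type*} [Fintype m] [DecidableEq m] [Fintype n] [DecidableEq n]

theorem entropy_of_isHermitian {ρ : Matrix n n ℂ} (hρ : ρ.IsHermitian) :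
    entropy ρ = (∑ i, Real.negMulLog (hρ.eigenvalues i)) / Real.log 2 :=
  dif_pos hρ

theorem entropy_of_isEmpty [IsEmpty n] (ρ : Matrix n n ℂ) : entropy ρ = 0 := by
  simp [entropy]

theorem entropy_unitary_conj {F ρ : Matrix n n ℂ} (hF : F ∈ unitaryGroup n ℂ)
    (hρ : ρ.IsHermitian) : entropy (F * ρ * Fᴴ) = entropy ρ := by
  have hconj : (F * ρ * Fᴴ).IsHermitian := isHermitian_mul_mul_conjTranspose F hρ
  have hchar : (F * ρ * Fᴴ).charpoly = ρ.charpoly := by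
    rw [Matrix.mul_assoc, charpoly_mul_comm, Matrix.mul_assoc, ← star_eq_conjTranspose,
      mem_unitaryGroup_iff'.1 hF, Matrix.mul_one]
  rw [entropy_of_isHermitian hconj, entropy_of_isHermitian hρ,
    (hconj.eigenvalues_eq_eigenvalues_iff hρ).2 hchar]

/-- The Shannon entropy (base 2) of the diagonal of `ρ`, that is, of the outcome of measuring `ρ`
in the standard basis. -/
def diagEntropy (ρ : Matrix n n ℂ) : ℝ :=
  (∑ i, Real.negMulLog (ρ i i).re) / Real.log 2

theorem entropy_diagonal (x : n → ℝ) :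
    entropy (diagonal fun i => (x i : ℂ)) = (∑ i, Real.negMulLog (x i)) / Real.log 2 := by
  have hx : (diagonal fun i => (x i : ℂ)).IsHermitian :=
    isHermitian_diagonal_of_self_adjoint _ (by ext; simp)
  have hroots : Finset.univ.val.map (fun i => (hx.eigenvalues i : ℂ))
      = Finset.univ.val.map fun i => (x i : ℂ) := by
    refine hx.roots_charpoly_eq_eigenvalues.symm.trans ?_
    rw [charpoly_diagonal, Polynomial.roots_prod _ _
      (Finset.prod_ne_zero_iff.2 fun _ _ => Polynomial.X_sub_C_ne_zero _)]
    simp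
  have hsum := congrArg (fun s => (s.map fun z : ℂ => Real.negMulLog z.re).sum) hroots
  simp only [Multiset.map_map, Function.comp_def, Complex.ofReal_re] at hsum
  rw [entropy_of_isHermitian hx]
  exact congrArg (· / Real.log 2) hsum

theorem entropy_zero : entropy (0 : Matrix n n ℂ) = 0 := by
  simpa using entropy_diagonal (0 : n → ℝ)

theorem eq_eigenvectorUnitary_mul_diagonal_mul {ρ : Matrix n n ℂ} (hρ : ρ.IsHermitian) :
    ρ = hρ.eigenvectorUnitary * diagonal (fun i => (hρ.eigenvalues i : ℂ)) *
      (hρ.eigenvectorUnitary : Matrix n n ℂ)ᴴ :=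
  hρ.spectral_theorem.trans (Unitary.conjStarAlgAut_apply _ _)

theorem diagEntropy_eigenbasis {ρ : Matrix n n ℂ} (hρ : ρ.IsHermitian) :
    diagEntropy ((hρ.eigenvectorUnitary : Matrix n n ℂ)ᴴ * ρ *
      (hρ.eigenvectorUnitary : Matrix n n ℂ))
      = entropy ρ := by
  have hdiag : (hρ.eigenvectorUnitary : Matrix n n ℂ)ᴴ * ρ * hρ.eigenvectorUnitary
      = diagonal fun i => (hρ.eigenvalues i : ℂ) :=
    (Unitary.conjStarAlgAut_star_apply _ _).symm.trans hρ.conjStarAlgAut_star_eigenvectorUnitary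
  simp [hdiag, diagEntropy, entropy_of_isHermitian hρ]

theorem normSq_mem_doublyStochastic {W : Matrix n n ℂ} (hW : W ∈ unitaryGroup n ℂ) :
    (of fun i j => Complex.normSq (W i j)) ∈ doublyStochastic ℝ n := by
  have sum_row : ∀ {W : Matrix n n ℂ}, W ∈ unitaryGroup n ℂ → ∀ i,
      ∑ j, Complex.normSq (W i j) = 1 := fun {W} hW i => by
    have hii := congrFun (congrFun (mem_unitaryGroup_iff.1 hW) i) i
    simp only [mul_apply, star_apply, one_apply_eq, RCLike.star_def, Complex.mul_conj] at hii
    exact_mod_cast hii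
  refine mem_doublyStochastic_iff_sum.2 ⟨fun _ _ => Complex.normSq_nonneg _, sum_row hW, ?_⟩
  intro j
  simpa [star_apply, Complex.normSq_conj] using sum_row (Unitary.star_mem hW) j

theorem re_mul_diagonal_mul_conjTranspose_apply_self (W : Matrix n n ℂ) (x : n → ℝ) (i : n) :
    ((W * diagonal (fun j => (x j : ℂ)) * Wᴴ) i i).re
      = ((of fun i j => Complex.normSq (W i j)) *ᵥ x) i := by
  rw [mul_apply, Complex.re_sum, mulVec, dotProduct]
  refine Finset.sum_congr rfl fun j _ => ?_
  rw [mul_diagonal, conjTranspose_apply, mul_right_comm, RCLike.star_def, Complex.mul_conj,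
    Complex.re_mul_ofReal, Complex.ofReal_re, of_apply]

theorem entropy_le_diagEntropy {ρ : Matrix n n ℂ} (hρ : ρ.PosSemidef) :
    entropy ρ ≤ diagEntropy ρ := by
  have hdiag : ∀ i, (ρ i i).re = ((of fun i j => Complex.normSq
      ((hρ.1.eigenvectorUnitary : Matrix n n ℂ) i j)) *ᵥ hρ.1.eigenvalues) i := fun i => by
    rw [← re_mul_diagonal_mul_conjTranspose_apply_self,
      ← eq_eigenvectorUnitary_mul_diagonal_mul hρ.1]
  rw [entropy_of_isHermitian hρ.1, diagEntropy]
  simp only [hdiag]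
  exact div_le_div_of_nonneg_right
    (sum_le_sum_mulVec_of_mem_doublyStochastic Real.concaveOn_negMulLog
      (normSq_mem_doublyStochastic hρ.1.eigenvectorUnitary.2) hρ.eigenvalues_nonneg)
    (Real.log_nonneg one_le_two)

theorem entropy_kronecker {ρ : Matrix m m ℂ} {σ : Matrix n n ℂ} (hρ : ρ.IsHermitian)
    (hσ : σ.IsHermitian) :
    entropy (ρ ⊗ₖ σ) = σ.trace.re * entropy ρ + ρ.trace.re * entropy σ := by
  set W : Matrix (m × n) (m × n) ℂ := hρ.eigenvectorUnitary ⊗ₖ hσ.eigenvectorUnitary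
  have hW : W ∈ unitaryGroup (m × n) ℂ :=
    kronecker_mem_unitary hρ.eigenvectorUnitary.2 hσ.eigenvectorUnitary.2
  set D : Matrix (m × n) (m × n) ℂ :=
    diagonal fun i => ((hρ.eigenvalues i.1 * hσ.eigenvalues i.2 : ℝ) : ℂ)
  have hD : D.IsHermitian := isHermitian_diagonal_of_self_adjoint _ (by ext; simp)
  have hspec : ρ ⊗ₖ σ = W * D * Wᴴ := by
    conv_lhs => rw [eq_eigenvectorUnitary_mul_diagonal_mul hρ,
      eq_eigenvectorUnitary_mul_diagonal_mul hσ]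
    simp only [W, D, mul_kronecker_mul, diagonal_kronecker_diagonal, conjTranspose_kronecker,
      Complex.ofReal_mul]
  rw [hspec, entropy_unitary_conj hW hD, entropy_diagonal, entropy_of_isHermitian hρ,
    entropy_of_isHermitian hσ, hρ.trace_eq_sum_eigenvalues, hσ.trace_eq_sum_eigenvalues]
  simp only [Real.negMulLog_mul, Fintype.sum_prod_type, Finset.sum_add_distrib, ← Finset.mul_sum,
    ← Finset.sum_mul, Complex.re_sum, Complex.coe_algebraMap, RCLike.ofReal, Complex.ofReal_re]
  ring

theorem entropy_maximallyMixed (d : ℕ) :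
    entropy ((d : ℂ)⁻¹ • (1 : Matrix (Fin d) (Fin d) ℂ)) = Real.logb 2 d := by
  have hdiag : (d : ℂ)⁻¹ • (1 : Matrix (Fin d) (Fin d) ℂ)
      = diagonal fun _ => (((d : ℝ)⁻¹ : ℝ) : ℂ) := by
    simp [smul_one_eq_diagonal]
  rcases eq_or_ne d 0 with rfl | hd
  · simp [entropy_of_isEmpty]
  · rw [hdiag, entropy_diagonal]
    simp [Real.negMulLog, Real.logb, hd]

end Entropy

section DensityMatrix

variable {n G : Type*} [Fintype n] [Fintype G]

theorem DensityMatrix.unitary_conj [DecidableEq n] {F ρ : Matrix n n ℂ} (hρ : DensityMatrix ρ)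
    (hF : F ∈ unitaryGroup n ℂ) : DensityMatrix (F * ρ * Fᴴ) := by
  refine ⟨hρ.1.mul_mul_conjTranspose_same F, ?_⟩
  rw [trace_mul_cycle, ← star_eq_conjTranspose, mem_unitaryGroup_iff'.1 hF, Matrix.one_mul, hρ.2]

theorem DensityMatrix.sum_smul {p : G → ℝ} (hp0 : ∀ g, 0 ≤ p g) (hp1 : ∑ g, p g = 1)
    {ρ : G → Matrix n n ℂ} (hρ : ∀ g, DensityMatrix (ρ g)) :
    DensityMatrix (∑ g, p g • ρ g) := by
  refine ⟨posSemidef_sum _ fun g _ => (hρ g).1.smul (hp0 g), ?_⟩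
  simp only [trace_sum, trace_smul, (hρ _).2, ← Finset.sum_smul, hp1, one_smul]

end DensityMatrix

section Block

variable {r m : Type*}

/-- The `(a, b)` block of a matrix on `ℂ^r ⊗ ℂ^m`, seen as an `r × r` array of `m × m` matrices.
The map `idTensor N` applies `N` to each block. -/
def block (a b : r) : Matrix (r × m) (r × m) ℂ →ₗ[ℂ] Matrix m m ℂ where
  toFun ρ := ρ.submatrix (Prod.mk a) (Prod.mk b)
  map_add' _ _ := rfl
  map_smul' _ _ := rfl

theorem block_apply (a b : r) (ρ : Matrix (r × m) (r × m) ℂ) (x y : m) :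
    block a b ρ x y = ρ (a, x) (b, y) :=
  rfl

theorem ext_block {ρ σ : Matrix (r × m) (r × m) ℂ} (h : ∀ a b, block a b ρ = block a b σ) :
    ρ = σ := by
  ext ⟨a, x⟩ ⟨b, y⟩
  exact congrFun (congrFun (h a b) x) y

theorem block_kronecker (A : Matrix r r ℂ) (X : Matrix m m ℂ) (a b : r) :
    block a b (A ⊗ₖ X) = A a b • X :=
  rfl

variable [Fintype r] [Fintype m]

theorem block_one_kronecker_conj [DecidableEq r] (B : Matrix m m ℂ)
    (ρ : Matrix (r × m) (r × m) ℂ) (a b : r) :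
    block a b (((1 : Matrix r r ℂ) ⊗ₖ B) * ρ * ((1 : Matrix r r ℂ) ⊗ₖ B)ᴴ)
      = B * block a b ρ * Bᴴ := by
  ext x y
  simp [block_apply, mul_apply, Fintype.sum_prod_type, one_apply, apply_ite, Finset.sum_mul]

theorem block_kronecker_one_conj [DecidableEq m] (A : Matrix r r ℂ)
    (ρ : Matrix (r × m) (r × m) ℂ) (a b : r) :
    block a b ((A ⊗ₖ (1 : Matrix m m ℂ)) * ρ * (A ⊗ₖ (1 : Matrix m m ℂ))ᴴ)
      = ∑ j, ∑ i, (A a i * star (A b j)) • block i j ρ := by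
  ext x y
  simp [block_apply, mul_apply, Fintype.sum_prod_type, one_apply, Matrix.sum_apply, apply_ite,
    Finset.sum_mul, mul_right_comm]

end Block

section PartialTrace

variable {r m : Type*}

/-- The partial trace over the left tensor factor, `Tr_r : ℂ^r ⊗ ℂ^m → ℂ^m` on matrices. -/
def partialTraceLeft [Fintype r] : Matrix (r × m) (r × m) ℂ →ₗ[ℂ] Matrix m m ℂ :=
  ∑ a, block a a

/-- The partial trace over the right tensor factor, `Tr_m : ℂ^r ⊗ ℂ^m → ℂ^r` on matrices. -/
def partialTraceRight [Fintype m] : Matrix (r × m) (r × m) ℂ →ₗ[ℂ] Matrix r r ℂ where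
  toFun ρ := ∑ x, ρ.submatrix (·, x) (·, x)
  map_add' ρ σ := by simp only [submatrix_add, Pi.add_apply, Finset.sum_add_distrib]
  map_smul' c ρ := by simp only [submatrix_smul, Pi.smul_apply, Finset.smul_sum, RingHom.id_apply]

theorem partialTraceLeft_apply [Fintype r] (ρ : Matrix (r × m) (r × m) ℂ) (x y : m) :
    partialTraceLeft ρ x y = ∑ a, ρ (a, x) (a, y) := by
  rw [partialTraceLeft, LinearMap.sum_apply, Matrix.sum_apply]
  rfl

theorem partialTraceRight_apply [Fintype m] (ρ : Matrix (r × m) (r × m) ℂ) (a b : r) :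
    partialTraceRight ρ a b = ∑ x, ρ (a, x) (b, x) :=
  sum_apply ..

theorem trace_block [Fintype m] (ρ : Matrix (r × m) (r × m) ℂ) (a b : r) :
    (block a b ρ).trace = partialTraceRight ρ a b :=
  (partialTraceRight_apply ρ a b).symm

theorem posSemidef_partialTraceLeft [Fintype r] {ρ : Matrix (r × m) (r × m) ℂ}
    (hρ : ρ.PosSemidef) :
    (partialTraceLeft ρ).PosSemidef := by
  rw [partialTraceLeft, LinearMap.sum_apply]
  exact posSemidef_sum _ fun a _ => hρ.submatrix (Prod.mk a)

theorem posSemidef_partialTraceRight [Fintype m] {ρ : Matrix (r × m) (r × m) ℂ}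
    (hρ : ρ.PosSemidef) :
    (partialTraceRight ρ).PosSemidef :=
  posSemidef_sum _ fun _ _ => hρ.submatrix _

theorem trace_partialTraceRight [Fintype r] [Fintype m] (ρ : Matrix (r × m) (r × m) ℂ) :
    (partialTraceRight ρ).trace = ρ.trace := by
  simp only [trace, diag_apply, partialTraceRight_apply, Fintype.sum_prod_type]

theorem trace_mul_mul_conjTranspose_mul [Fintype m] (K ρ X : Matrix m m ℂ) :
    (K * ρ * Kᴴ * X).trace = (ρ * (Kᴴ * X * K)).trace := by
  rw [Matrix.mul_assoc, Matrix.mul_assoc, trace_mul_comm]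
  simp only [Matrix.mul_assoc]

variable [Fintype r] [Fintype m]

theorem trace_partialTraceLeft_mul [DecidableEq r] (ρ : Matrix (r × m) (r × m) ℂ)
    (X : Matrix m m ℂ) :
    (partialTraceLeft ρ * X).trace = (ρ * ((1 : Matrix r r ℂ) ⊗ₖ X)).trace := by
  calc (partialTraceLeft ρ * X).trace = ∑ x, ∑ a, ∑ y, ρ (a, x) (a, y) * X y x := by
        simp only [trace, diag_apply, mul_apply, partialTraceLeft_apply, Finset.sum_mul]
        exact Finset.sum_congr rfl fun _ _ => Finset.sum_comm
    _ = (ρ * ((1 : Matrix r r ℂ) ⊗ₖ X)).trace := by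
        rw [Finset.sum_comm]
        simp [trace, mul_apply, Fintype.sum_prod_type, one_apply, Finset.sum_ite_irrel]

theorem trace_partialTraceRight_mul [DecidableEq m] (ρ : Matrix (r × m) (r × m) ℂ)
    (X : Matrix r r ℂ) :
    (partialTraceRight ρ * X).trace = (ρ * (X ⊗ₖ (1 : Matrix m m ℂ))).trace := by
  calc (partialTraceRight ρ * X).trace = ∑ a, ∑ x, ∑ b, ρ (a, x) (b, x) * X b a := by
        simp only [trace, diag_apply, mul_apply, partialTraceRight_apply, Finset.sum_mul]
        exact Finset.sum_congr rfl fun _ _ => Finset.sum_comm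
    _ = (ρ * (X ⊗ₖ (1 : Matrix m m ℂ))).trace := by
        simp [trace, mul_apply, Fintype.sum_prod_type, one_apply]

theorem partialTraceLeft_kronecker_conj [DecidableEq r] {A : Matrix r r ℂ}
    (hA : A ∈ unitaryGroup r ℂ) (B : Matrix m m ℂ) (ρ : Matrix (r × m) (r × m) ℂ) :
    partialTraceLeft ((A ⊗ₖ B) * ρ * (A ⊗ₖ B)ᴴ) = B * partialTraceLeft ρ * Bᴴ := by
  have hA : Aᴴ * A = 1 := mem_unitaryGroup_iff'.1 hA
  refine ext_iff_trace_mul_right.2 fun X => ?_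
  rw [trace_partialTraceLeft_mul, trace_mul_mul_conjTranspose_mul,
    trace_mul_mul_conjTranspose_mul, trace_partialTraceLeft_mul, conjTranspose_kronecker,
    ← mul_kronecker_mul, ← mul_kronecker_mul, Matrix.mul_one, hA]

theorem partialTraceRight_kronecker_conj [DecidableEq m] (A : Matrix r r ℂ) {B : Matrix m m ℂ}
    (hB : B ∈ unitaryGroup m ℂ) (ρ : Matrix (r × m) (r × m) ℂ) :
    partialTraceRight ((A ⊗ₖ B) * ρ * (A ⊗ₖ B)ᴴ) = A * partialTraceRight ρ * Aᴴ := by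
  have hB : Bᴴ * B = 1 := mem_unitaryGroup_iff'.1 hB
  refine ext_iff_trace_mul_right.2 fun X => ?_
  rw [trace_partialTraceRight_mul, trace_mul_mul_conjTranspose_mul,
    trace_mul_mul_conjTranspose_mul, trace_partialTraceRight_mul, conjTranspose_kronecker,
    ← mul_kronecker_mul, ← mul_kronecker_mul, Matrix.mul_one, hB]

theorem diagEntropy_le_diagEntropy_partialTrace {ρ : Matrix (r × m) (r × m) ℂ}
    (hρ : DensityMatrix ρ) :
    diagEntropy ρ ≤ diagEntropy (partialTraceRight ρ) + diagEntropy (partialTraceLeft ρ) := by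
  have hsum : ∑ a, ∑ x, (ρ (a, x) (a, x)).re = 1 := by
    rw [← Fintype.sum_prod_type fun i => (ρ i i).re, ← Complex.re_sum, ← Complex.one_re, ← hρ.2]
    rfl
  have hmarg := sum_negMulLog_le_sum_negMulLog_marginals
    (P := fun a x => (ρ (a, x) (a, x)).re)
    (fun a x => (Complex.le_def.1 hρ.1.diag_nonneg).1) hsum
  simp only [diagEntropy, partialTraceLeft_apply, partialTraceRight_apply, Complex.re_sum,
    Fintype.sum_prod_type, ← add_div]
  exact div_le_div_of_nonneg_right hmarg (Real.log_nonneg one_le_two)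

theorem entropy_le_entropy_partialTrace_add [DecidableEq r] [DecidableEq m]
    {ρ : Matrix (r × m) (r × m) ℂ} (hρ : DensityMatrix ρ) :
    entropy ρ ≤ entropy (partialTraceRight ρ) + entropy (partialTraceLeft ρ) := by
  have hR : (partialTraceRight ρ).IsHermitian := (posSemidef_partialTraceRight hρ.1).1
  have hL : (partialTraceLeft ρ).IsHermitian := (posSemidef_partialTraceLeft hρ.1).1
  set A : Matrix r r ℂ := (hR.eigenvectorUnitary : Matrix r r ℂ)ᴴ with hA
  set B : Matrix m m ℂ := (hL.eigenvectorUnitary : Matrix m m ℂ)ᴴ with hB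
  have hAu : A ∈ unitaryGroup r ℂ := Unitary.star_mem hR.eigenvectorUnitary.2
  have hBu : B ∈ unitaryGroup m ℂ := Unitary.star_mem hL.eigenvectorUnitary.2
  have hABu : A ⊗ₖ B ∈ unitaryGroup (r × m) ℂ := kronecker_mem_unitary hAu hBu
  set σ := (A ⊗ₖ B) * ρ * (A ⊗ₖ B)ᴴ
  have hσ : DensityMatrix σ := hρ.unitary_conj hABu
  calc entropy ρ = entropy σ := (entropy_unitary_conj hABu hρ.1.1).symm
    _ ≤ diagEntropy σ := entropy_le_diagEntropy hσ.1
    _ ≤ diagEntropy (partialTraceRight σ) + diagEntropy (partialTraceLeft σ) :=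
      diagEntropy_le_diagEntropy_partialTrace hσ
    _ = diagEntropy (A * partialTraceRight ρ * Aᴴ) + diagEntropy (B * partialTraceLeft ρ * Bᴴ) := by
      rw [partialTraceRight_kronecker_conj A hBu,
        partialTraceLeft_kronecker_conj hAu B]
    _ = entropy (partialTraceRight ρ) + entropy (partialTraceLeft ρ) := by
      rw [hA, hB, conjTranspose_conjTranspose, conjTranspose_conjTranspose,
        diagEntropy_eigenbasis, diagEntropy_eigenbasis]

end PartialTrace

section IdTensor

variable {r m n : Type*}

theorem block_idTensor (N : Matrix m m ℂ →ₗ[ℂ] Matrix n n ℂ) (ρ : Matrix (r × m) (r × m) ℂ)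
    (a b : r) : block a b (idTensor N ρ) = N (block a b ρ) :=
  rfl

theorem idTensor_sum_smul {G : Type*} [Fintype G] (N : Matrix m m ℂ →ₗ[ℂ] Matrix n n ℂ)
    (p : G → ℝ) (ρ : G → Matrix (r × m) (r × m) ℂ) :
    idTensor N (∑ g, p g • ρ g) = ∑ g, p g • idTensor N (ρ g) :=
  ext_block fun a b => by
    simp only [block_idTensor, map_sum, LinearMap.map_smul_of_tower]

theorem idTensor_kronecker (N : Matrix m m ℂ →ₗ[ℂ] Matrix n n ℂ) (A : Matrix r r ℂ)
    (X : Matrix m m ℂ) : idTensor N (A ⊗ₖ X) = A ⊗ₖ N X :=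
  ext_block fun a b => by
    rw [block_idTensor, block_kronecker, block_kronecker, map_smul]

theorem idTensor_kronecker_one_conj [Fintype r] [Fintype m] [DecidableEq m] [Fintype n]
    [DecidableEq n] (N : Matrix m m ℂ →ₗ[ℂ] Matrix n n ℂ) (A : Matrix r r ℂ)
    (ρ : Matrix (r × m) (r × m) ℂ) :
    idTensor N ((A ⊗ₖ (1 : Matrix m m ℂ)) * ρ * (A ⊗ₖ (1 : Matrix m m ℂ))ᴴ)
      = (A ⊗ₖ (1 : Matrix n n ℂ)) * idTensor N ρ * (A ⊗ₖ (1 : Matrix n n ℂ))ᴴ :=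
  ext_block fun a b => by
    simp only [block_idTensor, block_kronecker_one_conj, map_sum, map_smul]

theorem partialTraceLeft_idTensor [Fintype r] (N : Matrix m m ℂ →ₗ[ℂ] Matrix n n ℂ)
    (ρ : Matrix (r × m) (r × m) ℂ) :
    partialTraceLeft (idTensor N ρ) = N (partialTraceLeft ρ) := by
  simp only [partialTraceLeft, LinearMap.sum_apply, block_idTensor, map_sum]

variable [Fintype m] [Fintype n] {N : Matrix m m ℂ →ₗ[ℂ] Matrix n n ℂ}

theorem IsQuantumChannel.partialTraceRight_idTensor (hN : IsQuantumChannel N)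
    (ρ : Matrix (r × m) (r × m) ℂ) :
    partialTraceRight (idTensor N ρ) = partialTraceRight ρ := by
  ext a b
  rw [← trace_block, block_idTensor, hN.1, trace_block]

theorem IsQuantumChannel.densityMatrix_apply (hN : IsQuantumChannel N) {ρ : Matrix m m ℂ}
    (hρ : DensityMatrix ρ) : DensityMatrix (N ρ) := by
  refine ⟨?_, (hN.1 ρ).trans hρ.2⟩
  have hext : (idTensor N ((1 : Matrix (Fin 1) (Fin 1) ℂ) ⊗ₖ ρ)).PosSemidef :=
    hN.2 1 _ (PosSemidef.one.kronecker hρ.1)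
  have hblock : block 0 0 (idTensor N ((1 : Matrix (Fin 1) (Fin 1) ℂ) ⊗ₖ ρ)) = N ρ := by
    rw [block_idTensor, block_kronecker, one_apply_eq, one_smul]
  exact hblock ▸ hext.submatrix (Prod.mk 0)

theorem IsQuantumChannel.densityMatrix_idTensor (hN : IsQuantumChannel N) {k : ℕ}
    {ρ : Matrix (Fin k × m) (Fin k × m) ℂ} (hρ : DensityMatrix ρ) :
    DensityMatrix (idTensor N ρ) := by
  refine ⟨hN.2 k ρ hρ.1, ?_⟩
  rw [← trace_partialTraceRight, hN.partialTraceRight_idTensor, trace_partialTraceRight, hρ.2]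

end IdTensor

section MaximallyEntangled

variable {d : ℕ} {G : Type*} [Fintype G]

theorem maxEntSq_eq_smul_vecMulVec_vec_one :
    maxEntSq d = (d : ℂ)⁻¹ • vecMulVec (vec (1 : Matrix (Fin d) (Fin d) ℂ)) (star (vec 1)) := by
  ext ⟨a, x⟩ ⟨b, y⟩
  by_cases hx : x = a <;> by_cases hy : y = b <;>
    simp [maxEntSq, vecMulVec_apply, one_apply, hx, hy]

theorem partialTraceLeft_maxEntSq :
    partialTraceLeft (maxEntSq d) = (d : ℂ)⁻¹ • (1 : Matrix (Fin d) (Fin d) ℂ) := by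
  ext x y
  simp [partialTraceLeft_apply, maxEntSq, one_apply, ite_and, eq_comm]

theorem partialTraceRight_maxEntSq :
    partialTraceRight (maxEntSq d) = (d : ℂ)⁻¹ • (1 : Matrix (Fin d) (Fin d) ℂ) := by
  ext a b
  simp [partialTraceRight_apply, maxEntSq, one_apply, ite_and]

theorem densityMatrix_maxEntSq [NeZero d] : DensityMatrix (maxEntSq d) := by
  refine ⟨?_, ?_⟩
  · rw [maxEntSq_eq_smul_vecMulVec_vec_one]
    exact (posSemidef_vecMulVec_self_star _).smul (by positivity)
  · rw [← trace_partialTraceRight, partialTraceRight_maxEntSq]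
    simp [NeZero.ne d]

theorem densityMatrix_maximallyMixed [NeZero d] :
    DensityMatrix ((d : ℂ)⁻¹ • (1 : Matrix (Fin d) (Fin d) ℂ)) := by
  rw [← partialTraceRight_maxEntSq]
  exact ⟨posSemidef_partialTraceRight densityMatrix_maxEntSq.1,
    (trace_partialTraceRight _).trans densityMatrix_maxEntSq.2⟩

/-- The input state `(1 ⊗ A) Φ (1 ⊗ A)†`: the maximally entangled state `Φ` with `A` applied to its
right half. -/
def rotatedMaxEnt (A : Matrix (Fin d) (Fin d) ℂ) : Matrix (Fin d × Fin d) (Fin d × Fin d) ℂ :=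
  ((1 : Matrix (Fin d) (Fin d) ℂ) ⊗ₖ A) * maxEntSq d * ((1 : Matrix (Fin d) (Fin d) ℂ) ⊗ₖ A)ᴴ

theorem rotatedMaxEnt_eq_transpose_kronecker_conj (A : Matrix (Fin d) (Fin d) ℂ) :
    rotatedMaxEnt A = (Aᵀ ⊗ₖ (1 : Matrix (Fin d) (Fin d) ℂ)) * maxEntSq d *
      (Aᵀ ⊗ₖ (1 : Matrix (Fin d) (Fin d) ℂ))ᴴ := by
  have conj_maxEntSq : ∀ K : Matrix (Fin d × Fin d) (Fin d × Fin d) ℂ, K * maxEntSq d * Kᴴ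
      = (d : ℂ)⁻¹ • vecMulVec (K *ᵥ vec 1) (star (K *ᵥ vec 1)) := fun K => by
    rw [maxEntSq_eq_smul_vecMulVec_vec_one, Matrix.mul_smul, Matrix.smul_mul, mul_vecMulVec,
      vecMulVec_mul, star_mulVec]
  simp only [rotatedMaxEnt, conj_maxEntSq, kronecker_mulVec_vec, transpose_one, transpose_transpose,
    Matrix.mul_one, Matrix.one_mul]

variable {A : Matrix (Fin d) (Fin d) ℂ}

theorem partialTraceLeft_rotatedMaxEnt (hA : A ∈ unitaryGroup (Fin d) ℂ) :
    partialTraceLeft (rotatedMaxEnt A) = (d : ℂ)⁻¹ • (1 : Matrix (Fin d) (Fin d) ℂ) := by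
  have hA : A * Aᴴ = 1 := mem_unitaryGroup_iff.1 hA
  rw [rotatedMaxEnt, partialTraceLeft_kronecker_conj (one_mem _), partialTraceLeft_maxEntSq,
    Matrix.mul_smul, Matrix.smul_mul, Matrix.mul_one, hA]

theorem partialTraceRight_rotatedMaxEnt (hA : A ∈ unitaryGroup (Fin d) ℂ) :
    partialTraceRight (rotatedMaxEnt A) = (d : ℂ)⁻¹ • (1 : Matrix (Fin d) (Fin d) ℂ) := by
  rw [rotatedMaxEnt, partialTraceRight_kronecker_conj _ hA, partialTraceRight_maxEntSq,
    conjTranspose_one, Matrix.one_mul, Matrix.mul_one]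

theorem densityMatrix_rotatedMaxEnt [NeZero d] (hA : A ∈ unitaryGroup (Fin d) ℂ) :
    DensityMatrix (rotatedMaxEnt A) :=
  densityMatrix_maxEntSq.unitary_conj (kronecker_mem_unitary (one_mem _) hA)

theorem entropy_idTensor_rotatedMaxEnt {n : Type*} [Fintype n] [DecidableEq n]
    {N : Matrix (Fin d) (Fin d) ℂ →ₗ[ℂ] Matrix n n ℂ} (hN : (idTensor N (maxEntSq d)).IsHermitian)
    (hA : A ∈ unitaryGroup (Fin d) ℂ) :
    entropy (idTensor N (rotatedMaxEnt A)) = entropy (idTensor N (maxEntSq d)) := by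
  rw [rotatedMaxEnt_eq_transpose_kronecker_conj, idTensor_kronecker_one_conj]
  exact entropy_unitary_conj
    (kronecker_mem_unitary (transpose_mem_unitaryGroup_iff.2 hA) (one_mem _)) hN

/-- The family `U` is a unitary one-design: averaging its conjugation action sends every matrix to
the multiple of the identity with the same trace. -/
def IsOneDesign (U : G → Matrix (Fin d) (Fin d) ℂ) : Prop :=
  ∀ X : Matrix (Fin d) (Fin d) ℂ, (Fintype.card G : ℂ)⁻¹ • ∑ g, U g * X * (U g)ᴴ
    = (X.trace / (d : ℂ)) • (1 : Matrix (Fin d) (Fin d) ℂ)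

theorem IsOneDesign.average_one_kronecker_conj {U : G → Matrix (Fin d) (Fin d) ℂ}
    (hU : IsOneDesign U) {r : Type*} [Fintype r] [DecidableEq r]
    (ρ : Matrix (r × Fin d) (r × Fin d) ℂ) :
    ∑ g, (Fintype.card G : ℝ)⁻¹ •
        (((1 : Matrix r r ℂ) ⊗ₖ U g) * ρ * ((1 : Matrix r r ℂ) ⊗ₖ U g)ᴴ)
      = partialTraceRight ρ ⊗ₖ ((d : ℂ)⁻¹ • (1 : Matrix (Fin d) (Fin d) ℂ)) := by
  refine ext_block fun a b => ?_
  calc block a b (∑ g, (Fintype.card G : ℝ)⁻¹ •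
        (((1 : Matrix r r ℂ) ⊗ₖ U g) * ρ * ((1 : Matrix r r ℂ) ⊗ₖ U g)ᴴ))
      = ((Fintype.card G : ℝ)⁻¹ : ℂ) • ∑ g, U g * block a b ρ * (U g)ᴴ := by
        simp only [map_sum, LinearMap.map_smul_of_tower, block_one_kronecker_conj,
          ← Finset.smul_sum, ← Complex.ofReal_inv, Complex.coe_smul]
    _ = ((block a b ρ).trace / (d : ℂ)) • (1 : Matrix (Fin d) (Fin d) ℂ) := hU _
    _ = block a b (partialTraceRight ρ ⊗ₖ ((d : ℂ)⁻¹ • (1 : Matrix (Fin d) (Fin d) ℂ))) := by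
        rw [block_kronecker, trace_block, smul_smul, div_eq_mul_inv]

end MaximallyEntangled

section Holevo

variable {d : ℕ} {n G : Type*} [Fintype n] [DecidableEq n] [Fintype G]

/-- The Holevo information of the ensemble of states `ω g` with weights `p g`. -/
def holevoInfo (p : G → ℝ) (ω : G → Matrix n n ℂ) : ℝ :=
  entropy (∑ g, p g • ω g) - ∑ g, p g * entropy (ω g)

variable {N : Matrix (Fin d) (Fin d) ℂ →ₗ[ℂ] Matrix n n ℂ} {U : G → Matrix (Fin d) (Fin d) ℂ}
  {p : G → ℝ}

theorem holevoInfo_of_entropy_eq {s : ℝ} {ω : G → Matrix n n ℂ} (hp1 : ∑ g, p g = 1)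
    (hω : ∀ g, entropy (ω g) = s) : holevoInfo p ω = entropy (∑ g, p g • ω g) - s := by
  simp only [holevoInfo, hω, ← Finset.sum_mul, hp1, one_mul]

theorem entropy_idTensor_mixture_le [NeZero d] (hN : IsQuantumChannel N)
    (hU : ∀ g, U g ∈ unitaryGroup (Fin d) ℂ) (hp0 : ∀ g, 0 ≤ p g) (hp1 : ∑ g, p g = 1) :
    entropy (idTensor N (∑ g, p g • rotatedMaxEnt (U g)))
      ≤ Real.logb 2 d + entropy (N ((d : ℂ)⁻¹ • (1 : Matrix (Fin d) (Fin d) ℂ))) := by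
  set ρ := ∑ g, p g • rotatedMaxEnt (U g) with hρ
  have hρL : partialTraceLeft ρ = (d : ℂ)⁻¹ • (1 : Matrix (Fin d) (Fin d) ℂ) := by
    simp only [hρ, map_sum, LinearMap.map_smul_of_tower, partialTraceLeft_rotatedMaxEnt (hU _),
      ← Finset.sum_smul, hp1, one_smul]
  have hρR : partialTraceRight ρ = (d : ℂ)⁻¹ • (1 : Matrix (Fin d) (Fin d) ℂ) := by
    simp only [hρ, map_sum, LinearMap.map_smul_of_tower, partialTraceRight_rotatedMaxEnt (hU _),
      ← Finset.sum_smul, hp1, one_smul]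
  have hρd : DensityMatrix ρ :=
    DensityMatrix.sum_smul hp0 hp1 fun g => densityMatrix_rotatedMaxEnt (hU g)
  calc entropy (idTensor N ρ)
      ≤ entropy (partialTraceRight (idTensor N ρ)) + entropy (partialTraceLeft (idTensor N ρ)) :=
        entropy_le_entropy_partialTrace_add (hN.densityMatrix_idTensor hρd)
    _ = Real.logb 2 d + entropy (N ((d : ℂ)⁻¹ • (1 : Matrix (Fin d) (Fin d) ℂ))) := by
        rw [hN.partialTraceRight_idTensor, partialTraceLeft_idTensor, hρL, hρR,
          entropy_maximallyMixed]

theorem IsOneDesign.entropy_idTensor_average [NeZero d] (hdesign : IsOneDesign U)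
    (hN : IsQuantumChannel N) :
    entropy (idTensor N (∑ g, (Fintype.card G : ℝ)⁻¹ • rotatedMaxEnt (U g)))
      = Real.logb 2 d + entropy (N ((d : ℂ)⁻¹ • (1 : Matrix (Fin d) (Fin d) ℂ))) := by
  have hmixed : DensityMatrix ((d : ℂ)⁻¹ • (1 : Matrix (Fin d) (Fin d) ℂ)) :=
    densityMatrix_maximallyMixed
  have hNmixed := hN.densityMatrix_apply hmixed
  have hprod : ∑ g, (Fintype.card G : ℝ)⁻¹ • rotatedMaxEnt (U g)
      = ((d : ℂ)⁻¹ • (1 : Matrix (Fin d) (Fin d) ℂ)) ⊗ₖ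
        ((d : ℂ)⁻¹ • (1 : Matrix (Fin d) (Fin d) ℂ)) :=
    (hdesign.average_one_kronecker_conj (maxEntSq d)).trans (by rw [partialTraceRight_maxEntSq])
  rw [hprod, idTensor_kronecker, entropy_kronecker hmixed.1.1 hNmixed.1.1, hmixed.2, hNmixed.2,
    Complex.one_re, one_mul, one_mul, entropy_maximallyMixed]

end Holevo

theorem stmt6_general {d : ℕ} {n : Type*} [Fintype n] [DecidableEq n]
    (N : Matrix (Fin d) (Fin d) ℂ →ₗ[ℂ] Matrix n n ℂ) (hN : IsQuantumChannel N)
    {G : Type*} [Fintype G] (U : G → Matrix (Fin d) (Fin d) ℂ)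
    (hU : ∀ g, U g ∈ unitaryGroup (Fin d) ℂ)
    (p : G → ℝ) (hp0 : ∀ g, 0 ≤ p g) (hp1 : ∑ g, p g = 1) :
    holevoInfo p (fun g => idTensor N (rotatedMaxEnt (U g)))
        ≤ Real.logb 2 d + entropy (N ((d : ℂ)⁻¹ • (1 : Matrix (Fin d) (Fin d) ℂ)))
          - entropy (idTensor N (maxEntSq d)) ∧
      (IsOneDesign U → (∀ g, p g = (Fintype.card G : ℝ)⁻¹) →
        holevoInfo p (fun g => idTensor N (rotatedMaxEnt (U g)))
          = Real.logb 2 d + entropy (N ((d : ℂ)⁻¹ • (1 : Matrix (Fin d) (Fin d) ℂ)))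
            - entropy (idTensor N (maxEntSq d))) := by
  rcases Nat.eq_zero_or_pos d with rfl | hd
  · simp [holevoInfo, entropy_of_isEmpty, Subsingleton.elim _ (0 : Matrix (Fin 0) (Fin 0) ℂ),
      entropy_zero]
  have : NeZero d := ⟨hd.ne'⟩
  have hΦ := hN.densityMatrix_idTensor (densityMatrix_maxEntSq (d := d))
  rw [holevoInfo_of_entropy_eq hp1 fun g => entropy_idTensor_rotatedMaxEnt hΦ.1.1 (hU g),
    ← idTensor_sum_smul]
  refine ⟨sub_le_sub_right (entropy_idTensor_mixture_le hN hU hp0 hp1) _, fun hdesign hp => ?_⟩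
  simp only [hp, hdesign.entropy_idTensor_average hN]

/-- for a covariant channel `N` whose input representation is a unitary
one-design, the Holevo information of the ensemble `{p(g), (id ⊗ N)((1 ⊗ U^g)Φ(1 ⊗ U^g)†)}`
is at most `log₂ d + S(N(1/d)) − S((id ⊗ N)(Φ))`, with equality for the uniform
distribution. -/
theorem stmt6 {d dB : ℕ}
    (N : Matrix (Fin d) (Fin d) ℂ →ₗ[ℂ] Matrix (Fin dB) (Fin dB) ℂ)
    (hN : IsQuantumChannel N)
    {G : Type*} [Fintype G]
    (U : G → Matrix (Fin d) (Fin d) ℂ) (V : G → Matrix (Fin dB) (Fin dB) ℂ)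
    (hU : ∀ g, U g ∈ Matrix.unitaryGroup (Fin d) ℂ)
    (hV : ∀ g, V g ∈ Matrix.unitaryGroup (Fin dB) ℂ)
    (hdesign : ∀ X : Matrix (Fin d) (Fin d) ℂ,
      ((Fintype.card G : ℂ))⁻¹ • ∑ g, U g * X * (U g)ᴴ
        = (X.trace / (d : ℂ)) • (1 : Matrix (Fin d) (Fin d) ℂ))
    (hcov : ∀ (ρ : Matrix (Fin d) (Fin d) ℂ) (g : G),
      N (U g * ρ * (U g)ᴴ) = V g * N ρ * (V g)ᴴ)
    (p : G → ℝ) (hp0 : ∀ g, 0 ≤ p g) (hp1 : ∑ g, p g = 1) :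
    (entropy (∑ g, p g •
          idTensor N (((1 : Matrix (Fin d) (Fin d) ℂ) ⊗ₖ U g) * maxEntSq d *
            (((1 : Matrix (Fin d) (Fin d) ℂ) ⊗ₖ U g))ᴴ))
        - ∑ g, p g * entropy
            (idTensor N (((1 : Matrix (Fin d) (Fin d) ℂ) ⊗ₖ U g) * maxEntSq d *
              (((1 : Matrix (Fin d) (Fin d) ℂ) ⊗ₖ U g))ᴴ))
      ≤ Real.logb 2 d + entropy (N (((d : ℂ))⁻¹ • (1 : Matrix (Fin d) (Fin d) ℂ)))
          - entropy (idTensor N (maxEntSq d))) ∧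
    ((∀ g, p g = ((Fintype.card G : ℝ))⁻¹) →
      (entropy (∑ g, p g •
            idTensor N (((1 : Matrix (Fin d) (Fin d) ℂ) ⊗ₖ U g) * maxEntSq d *
              (((1 : Matrix (Fin d) (Fin d) ℂ) ⊗ₖ U g))ᴴ))
          - ∑ g, p g * entropy
              (idTensor N (((1 : Matrix (Fin d) (Fin d) ℂ) ⊗ₖ U g) * maxEntSq d *
                (((1 : Matrix (Fin d) (Fin d) ℂ) ⊗ₖ U g))ᴴ))
        = Real.logb 2 d + entropy (N (((d : ℂ))⁻¹ • (1 : Matrix (Fin d) (Fin d) ℂ)))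
            - entropy (idTensor N (maxEntSq d)))) := by
  exact (stmt6_general N hN U hU p hp0 hp1).imp_right (· hdesign)
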